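/- Suppose α has an adjusted nearest integer expansion and let d_i^+ be the quantity associated to γ_*. If ε_{i+1} = −1 and a_{i+1} ≥ 3, then (1 − α_i + |d_i^+|)/(1 − ᾱ_i α_i) ≥ (√10 + 2)/(√10 + 2 + 2(1 − ᾱ_i)). -/

import Mathlib

open Filter Finset

attribute [local instance] Classical.propDecidable

/-- Distance from `x` to the nearest integer, `‖x‖`. -/
noncomputable def nint (x : ℝ) : ℝ := |x - round x|

/-- The two-sided inhomogeneous approximation constant
`M(α,γ) = liminf_{|n|→∞} |n|·‖nα-γ‖`. -/
noncomputable def Mval (α γ : ℝ) : ℝ :=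
  Filter.liminf (fun n : ℤ => (|n| : ℝ) * nint (n * α - γ)) Filter.cofinite

/-- Denominators `q_i` of a semi-regular continued fraction with partial quotients `a`
and signs `e`: `q_0 = 1`, `q_1 = a_1`, `q_i = a_i q_{i-1} + ε_i q_{i-2}`. -/
noncomputable def qs (a e : ℕ → ℤ) : ℕ → ℤ
  | 0 => 1
  | 1 => a 1
  | i + 2 => a (i + 2) * qs a e (i + 1) + e (i + 2) * qs a e i

/-- Reversed tails `ᾱ_i = q_{i-1}/q_i` (with `ᾱ_0 = 0`). -/
noncomputable def ab (a e : ℕ → ℤ) (i : ℕ) : ℝ :=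
  if i = 0 then 0 else (qs a e (i - 1) : ℝ) / (qs a e i : ℝ)

/-- An adjusted nearest integer expansion of `α`: a semi-regular continued fraction
`α = 1/(a_1 + ε_2/(a_2 + ε_3/(a_3 + ⋯)))` with tails `t i = α_i`, satisfying the
conditions (i)-(iv) of an adjusted expansion. -/
structure ANIE (α : ℝ) where
  /-- partial quotients `a_i` (for `i ≥ 1`) -/
  a : ℕ → ℤ
  /-- signs `ε_i` -/
  e : ℕ → ℤ
  /-- tails: `t i = α_i`, `t 0 = α` -/
  t : ℕ → ℝ
  ha : ∀ i, 1 ≤ i → 2 ≤ a i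
  he : ∀ i, e i = 1 ∨ e i = -1
  he1 : e 1 = 1
  ht0 : t 0 = α
  htpos : ∀ i, 0 < t i
  htlt1 : ∀ i, t i < 1
  hrec : ∀ i, t i = 1 / ((a (i + 1) : ℝ) + (e (i + 2) : ℝ) * t (i + 1))
  /-- condition (i): `a_i = 2` implies `ε_i = +1` or `ε_{i+1} = +1` -/
  hcond1 : ∀ i, 1 ≤ i → a i = 2 → e i = 1 ∨ e (i + 1) = 1
  /-- condition (ii): if `a_i = 2`, `ε_i = -1` then `1/ᾱ_{i-1} - 1/α_i ≥ 1` -/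
  hcond2 : ∀ i, 1 ≤ i → a i = 2 → e i = -1 → 1 / ab a e (i - 1) - 1 / t i ≥ 1
  /-- condition (iii): if `a_i = 2`, `ε_{i+1} = -1` then `1/α_i - 1/ᾱ_{i-1} > 1` -/
  hcond3 : ∀ i, 1 ≤ i → a i = 2 → e (i + 1) = -1 → 1 / t i - 1 / ab a e (i - 1) > 1
  /-- condition (iv): no block `2, (-3,)^k, -2` in the sequence `(ε_i a_i)` -/
  hcond4 : ∀ i k, 1 ≤ i →
    ¬(e i * a i = 2 ∧ (∀ j, j < k → e (i + 1 + j) * a (i + 1 + j) = -3) ∧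
        e (i + 1 + k) * a (i + 1 + k) = -2)

namespace ANIE

variable {α : ℝ}

/-- `D n = D_{n-1} = α_0 α_1 ⋯ α_{n-1}` (so `D 0 = 1`, `D 1 = α`). -/
noncomputable def D (E : ANIE α) (n : ℕ) : ℝ := ∏ j ∈ Finset.range n, E.t j

/-- The number of indices `1 ≤ k ≤ i` with `a_k` odd. -/
noncomputable def oddIdx (E : ANIE α) (i : ℕ) : ℕ :=
  ((Finset.Icc 1 i).filter fun k => Odd (E.a k)).card

/-- `λ_i`: zero if `a_i` is even, `(-1)^j` if `a_i = a_{n_j}` is the `j`-th odd partial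
quotient. -/
noncomputable def lam (E : ANIE α) (i : ℕ) : ℤ :=
  if Odd (E.a i) then (-1) ^ E.oddIdx i else 0

/-- `γ_* = Σ_{i≥1} (a_i - 1 + ε_i + λ_i)/2 · D_{i-1}`. -/
noncomputable def gammaStar (E : ANIE α) : ℝ :=
  ∑' k : ℕ,
    (((E.a (k + 1) : ℝ) - 1 + (E.e (k + 1) : ℝ) + (E.lam (k + 1) : ℝ)) / 2) * E.D (k + 1)

/-- `ᾱ_i = q_{i-1}/q_i`. -/
noncomputable def abar (E : ANIE α) (i : ℕ) : ℝ := ab E.a E.e i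

/-- `δ_i = -(-ε_1)(-ε_2)⋯(-ε_{i+1})`. -/
noncomputable def delta (E : ANIE α) (i : ℕ) : ℤ := -∏ j ∈ Finset.Icc 1 (i + 1), (-E.e j)

/-- `d_n^- = (Σ_{i=1}^n t_i δ_{i-1} q_{i-1}) / (δ_{n-1} q_n)` for `γ_*` (`t_i = λ_i`). -/
noncomputable def dminus (E : ANIE α) (n : ℕ) : ℝ :=
  (∑ i ∈ Finset.Icc 1 n, (E.lam i : ℝ) * (E.delta (i - 1) : ℝ) * (qs E.a E.e (i - 1) : ℝ)) /
    ((E.delta (n - 1) : ℝ) * (qs E.a E.e n : ℝ))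

/-- `d_n^+ = (Σ_{i=n+1}^∞ t_i D_{i-1}) / D_{n-1}` for `γ_*` (`t_i = λ_i`). -/
noncomputable def dplus (E : ANIE α) (n : ℕ) : ℝ :=
  (∑' k : ℕ, (E.lam (n + 1 + k) : ℝ) * E.D (n + 1 + k)) / E.D n

/-- `i ∈ S(γ_*)`: `|d_i^-| ≤ 1 - ᾱ_i` and `-(1-ε_{i+1}α_i) ≤ d_i^+ ≤ 1+ε_{i+1}α_i`. -/
def inS (E : ANIE α) (i : ℕ) : Prop :=
  |E.dminus i| ≤ 1 - E.abar i ∧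
    -(1 - (E.e (i + 1) : ℝ) * E.t i) ≤ E.dplus i ∧
      E.dplus i ≤ 1 + (E.e (i + 1) : ℝ) * E.t i

end ANIE

/-!
The value `τ = (4 - √10) / 3` satisfies `(√10 + 4) τ = 2`, and clearing denominators reduces the
claim to `α_i - |d_i⁺| ≤ τ`. The signs of the nonzero `λ_k` alternate, which turns the recursion
`d_n⁺ = α_n (λ_{n+1} + d_{n+1}⁺)` into `|d_n⁺| = α_n (1 - |d_{n+1}⁺|)` or `α_n |d_{n+1}⁺|` according
to the parity of `a_{n+1}`. If the bound fails at `i`, these recursions and the adjustment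
conditions force the block `4, -2, 2, 2` followed by a partial quotient `≥ 3` with sign `-1`. So the
hypotheses hold again at `i + 4`, and since `τ` is the fixed point of the Möbius map of the block,
the excess over `τ` is at most `1 / 25` of the excess at `i + 4`. As the excess is bounded, it
cannot be positive.
-/

theorem nonpos_of_le_mul_of_bddAbove {ι : Type*} {s : Set ι} {f : ι → ℝ} {c : ℝ} (hc₀ : 0 ≤ c)
    (hc₁ : c < 1) (hf : BddAbove (f '' s))
    (h : ∀ x ∈ s, 0 < f x → ∃ y ∈ s, f x ≤ c * f y) : ∀ x ∈ s, f x ≤ 0 := by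
  intro x hx
  by_contra! hpos
  have le_sup : ∀ y ∈ s, f y ≤ sSup (f '' s) := fun y hy => le_csSup hf (Set.mem_image_of_mem f hy)
  have sup_pos : 0 < sSup (f '' s) := hpos.trans_le (le_sup x hx)
  have sup_le : sSup (f '' s) ≤ c * sSup (f '' s) := by
    refine csSup_le ⟨f x, Set.mem_image_of_mem f hx⟩ ?_
    rintro _ ⟨y, hy, rfl⟩
    rcases le_or_gt (f y) 0 with hy₀ | hy₀
    · exact hy₀.trans (by positivity)
    · obtain ⟨z, hz, hyz⟩ := h y hy hy₀
      exact hyz.trans (mul_le_mul_of_nonneg_left (le_sup z hz) hc₀)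
  nlinarith

namespace ANIE

variable {α : ℝ} (E : ANIE α)

section Tails

theorem t_mul_eq_one (i : ℕ) : E.t i * (E.a (i + 1) + E.e (i + 2) * E.t (i + 1)) = 1 := by
  have hne := (E.htpos i).ne'
  rw [E.hrec i, one_div] at hne ⊢
  exact inv_mul_cancel₀ (fun h => hne (inv_eq_zero.mpr h))

theorem t_mul_a_lt_one_iff (i : ℕ) : E.t i * E.a (i + 1) < 1 ↔ E.e (i + 2) = 1 := by
  have hrec := E.t_mul_eq_one i
  have htt : 0 < E.t i * E.t (i + 1) := mul_pos (E.htpos i) (E.htpos (i + 1))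
  rcases E.he (i + 2) with he | he <;> rw [he] at hrec ⊢ <;> push_cast at hrec
  · exact iff_of_true (by linarith) rfl
  · exact iff_of_false (by linarith) (by decide)

theorem e_succ_eq_one {k : ℕ} (hk : 1 ≤ k) (ha : E.a k = 2) (he : E.e k = -1) :
    E.e (k + 1) = 1 :=
  (E.hcond1 k hk ha).resolve_left (by rw [he]; decide)

theorem t_lt_half_of_e_eq_neg_one {i : ℕ} (he : E.e (i + 1) = -1) : E.t i < 1 / 2 := by
  rcases (E.ha (i + 1) (by omega)).eq_or_lt with ha | ha
  · have he' : E.e (i + 2) = 1 := E.e_succ_eq_one (by omega) ha.symm he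
    have hlt := (E.t_mul_a_lt_one_iff i).mpr he'
    rw [← ha] at hlt
    push_cast at hlt
    linarith
  · have ha' : (3 : ℝ) ≤ E.a (i + 1) := by exact_mod_cast ha
    have hrec := E.t_mul_eq_one i
    have ht := E.htpos i
    have ht' := E.htpos (i + 1)
    have ht₁ := E.htlt1 (i + 1)
    rcases E.he (i + 2) with he | he <;> rw [he] at hrec <;> push_cast at hrec <;> nlinarith

theorem t_mul_a_sub_half_lt_one (i : ℕ) : E.t i * (E.a (i + 1) - 1 / 2) < 1 := by
  have ht := E.htpos i
  rcases E.he (i + 2) with he | he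
  · linarith [(E.t_mul_a_lt_one_iff i).mpr he]
  · have hrec := E.t_mul_eq_one i
    have ht' : E.t (i + 1) < 1 / 2 := E.t_lt_half_of_e_eq_neg_one he
    rw [he] at hrec
    push_cast at hrec
    nlinarith

theorem t_mul_lt_one_of_le_a {i : ℕ} {m : ℤ} (hm : m ≤ E.a (i + 1)) :
    E.t i * (m - 1 / 2) < 1 := by
  have hm' : (m : ℝ) ≤ E.a (i + 1) := by exact_mod_cast hm
  have ht := E.htpos i
  calc E.t i * (m - 1 / 2) ≤ E.t i * (E.a (i + 1) - 1 / 2) := by gcongr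
    _ < 1 := E.t_mul_a_sub_half_lt_one i

theorem t_lt_two_thirds (i : ℕ) : E.t i < 2 / 3 := by
  have := E.t_mul_lt_one_of_le_a (E.ha (i + 1) (by omega))
  push_cast at this
  linarith

theorem a_eq_two_of_two_fifths_le {i : ℕ} (h : 2 / 5 ≤ E.t i) : E.a (i + 1) = 2 := by
  by_contra hne
  have h₂ := E.ha (i + 1) (by omega)
  have := E.t_mul_lt_one_of_le_a (i := i) (m := 3) (by omega)
  push_cast at this
  linarith

theorem three_le_a_succ {k : ℕ} (hk : 1 ≤ k) (hek : E.e k = 1) (hak : E.a k = 2)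
    (he : E.e (k + 1) = -1) : 3 ≤ E.a (k + 1) := by
  have h₂ := E.ha (k + 1) (by omega)
  have hne : E.a (k + 1) ≠ 2 := fun ha =>
    E.hcond4 k 0 hk ⟨by rw [hek, hak, one_mul], fun j hj => absurd hj j.not_lt_zero,
      by rw [add_zero, he, ha, neg_one_mul]⟩
  omega

end Tails

section ReversedTails

theorem qs_pos_and_lt_succ (n : ℕ) :
    0 < qs E.a E.e n ∧ qs E.a E.e n < qs E.a E.e (n + 1) := by
  induction n with
  | zero =>
    have ha := E.ha 1 le_rfl
    simp only [qs]
    omega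
  | succ n ih =>
    obtain ⟨hpos, hlt⟩ := ih
    refine ⟨hpos.trans hlt, ?_⟩
    have ha := E.ha (n + 2) (by omega)
    rw [qs]
    rcases E.he (n + 2) with he | he <;> rw [he] <;> nlinarith

theorem abar_zero : E.abar 0 = 0 := by rw [abar, ab, if_pos rfl]

theorem abar_succ (n : ℕ) :
    E.abar (n + 1) = (qs E.a E.e n : ℝ) / (qs E.a E.e (n + 1) : ℝ) := by
  rw [abar, ab, if_neg n.succ_ne_zero, Nat.add_sub_cancel]

theorem abar_nonneg (n : ℕ) : 0 ≤ E.abar n := by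
  cases n with
  | zero => exact E.abar_zero.ge
  | succ n =>
    have hn : (0 : ℝ) < qs E.a E.e n := by exact_mod_cast (E.qs_pos_and_lt_succ n).1
    have hn' : (0 : ℝ) < qs E.a E.e (n + 1) := by
      exact_mod_cast (E.qs_pos_and_lt_succ (n + 1)).1
    rw [abar_succ]
    positivity

theorem abar_lt_one (n : ℕ) : E.abar n < 1 := by
  cases n with
  | zero => exact E.abar_zero.trans_lt one_pos
  | succ n =>
    have hn : (0 : ℝ) < qs E.a E.e (n + 1) := by exact_mod_cast (E.qs_pos_and_lt_succ (n + 1)).1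
    rw [abar_succ, div_lt_one hn]
    exact_mod_cast (E.qs_pos_and_lt_succ n).2

theorem one_div_abar_succ (n : ℕ) :
    1 / E.abar (n + 1) = E.a (n + 1) + E.e (n + 1) * E.abar n := by
  rw [abar_succ, one_div_div]
  cases n with
  | zero => simp [qs, abar_zero]
  | succ n =>
    have hn : (0 : ℝ) < qs E.a E.e (n + 1) := by exact_mod_cast (E.qs_pos_and_lt_succ (n + 1)).1
    rw [abar_succ, qs]
    push_cast
    field_simp

end ReversedTails

section DPlus

theorem D_pos (n : ℕ) : 0 < E.D n := Finset.prod_pos fun j _ => E.htpos j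

theorem D_succ (n : ℕ) : E.D (n + 1) = E.D n * E.t n := Finset.prod_range_succ _ _

theorem D_add_le (n m : ℕ) : E.D (n + m) ≤ E.D n * (2 / 3) ^ m := by
  induction m with
  | zero => simp
  | succ m ih =>
    have hD := E.D_pos n
    have ht := E.htpos (n + m)
    have ht' := E.t_lt_two_thirds (n + m)
    rw [← add_assoc, D_succ, pow_succ, ← mul_assoc]
    gcongr

theorem abs_lam_le_one (n : ℕ) : |(E.lam n : ℝ)| ≤ 1 := by
  unfold lam
  split_ifs <;> simp

theorem norm_lam_mul_D_le (n k : ℕ) :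
    ‖(E.lam (n + k) : ℝ) * E.D (n + k)‖ ≤ E.D n * (2 / 3) ^ k := by
  have hD := E.D_pos (n + k)
  calc ‖(E.lam (n + k) : ℝ) * E.D (n + k)‖ = |(E.lam (n + k) : ℝ)| * E.D (n + k) := by
        rw [norm_mul, Real.norm_eq_abs, Real.norm_of_nonneg hD.le]
    _ ≤ E.D (n + k) := mul_le_of_le_one_left hD.le (E.abs_lam_le_one _)
    _ ≤ E.D n * (2 / 3) ^ k := E.D_add_le n k

theorem hasSum_D_mul_two_thirds_pow (n : ℕ) :
    HasSum (fun k : ℕ => E.D n * (2 / 3) ^ k) (E.D n * 3) := by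
  have hgeom : HasSum (fun k : ℕ => (2 / 3 : ℝ) ^ k) 3 := by
    have := hasSum_geometric_of_lt_one (r := (2 / 3 : ℝ)) (by norm_num) (by norm_num)
    norm_num at this
    exact this
  exact hgeom.mul_left (E.D n)

theorem summable_lam_mul_D (n : ℕ) :
    Summable fun k : ℕ => (E.lam (n + k) : ℝ) * E.D (n + k) :=
  .of_norm_bounded (E.hasSum_D_mul_two_thirds_pow n).summable (E.norm_lam_mul_D_le n)

theorem abs_dplus_le_three (n : ℕ) : |E.dplus n| ≤ 3 := by
  have hD := E.D_pos n
  have hsum : |∑' k : ℕ, (E.lam (n + 1 + k) : ℝ) * E.D (n + 1 + k)| ≤ E.D (n + 1) * 3 :=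
    tsum_of_norm_bounded (E.hasSum_D_mul_two_thirds_pow (n + 1)) (E.norm_lam_mul_D_le (n + 1))
  rw [dplus, abs_div, abs_of_pos hD, div_le_iff₀ hD]
  rw [D_succ] at hsum
  nlinarith [E.htlt1 n]

theorem dplus_eq (n : ℕ) : E.dplus n = E.t n * (E.lam (n + 1) + E.dplus (n + 1)) := by
  have hD := E.D_pos n
  have ht := E.htpos n
  have hidx (k : ℕ) : n + 1 + (k + 1) = n + 1 + 1 + k := by ring
  have hshift : ∑' k : ℕ, (E.lam (n + 1 + (k + 1)) : ℝ) * E.D (n + 1 + (k + 1)) =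
      ∑' k : ℕ, (E.lam (n + 1 + 1 + k) : ℝ) * E.D (n + 1 + 1 + k) :=
    tsum_congr fun k => by rw [hidx k]
  rw [dplus, dplus, (E.summable_lam_mul_D (n + 1)).tsum_eq_zero_add, hshift, add_zero, D_succ]
  field_simp

/-- The sign of the first nonzero `λ_k` with `k > n`; up to this sign, `d_n⁺` is the alternating sum
of the `D_{k-1} / D_{n-1}` over the odd `a_k` with `k > n`. -/
noncomputable def leadingSign (n : ℕ) : ℝ := (-1) ^ (E.oddIdx n + 1)

theorem leadingSign_mul_self (n : ℕ) : E.leadingSign n * E.leadingSign n = 1 := by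
  rw [leadingSign, ← mul_pow, neg_one_mul, neg_neg, one_pow]

theorem abs_leadingSign (n : ℕ) : |E.leadingSign n| = 1 := abs_neg_one_pow _

theorem oddIdx_succ (n : ℕ) :
    E.oddIdx (n + 1) = E.oddIdx n + if Odd (E.a (n + 1)) then 1 else 0 := by
  unfold oddIdx
  rw [← Finset.insert_Icc_right_eq_Icc_add_one (by omega), Finset.filter_insert]
  split_ifs with h
  · rw [Finset.card_insert_of_notMem (by simp)]
  · rw [add_zero]

theorem leadingSign_mul_dplus_of_odd {n : ℕ} (h : Odd (E.a (n + 1))) :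
    E.leadingSign n * E.dplus n = E.t n * (1 - E.leadingSign (n + 1) * E.dplus (n + 1)) := by
  have hidx : E.oddIdx (n + 1) = E.oddIdx n + 1 := by rw [oddIdx_succ, if_pos h]
  have hlam : (E.lam (n + 1) : ℝ) = E.leadingSign n := by
    rw [lam, if_pos h, hidx, leadingSign]
    push_cast
    rfl
  have hsign : E.leadingSign (n + 1) = -E.leadingSign n := by
    rw [leadingSign, leadingSign, hidx, pow_succ, mul_neg_one]
  rw [dplus_eq, hlam, hsign]
  linear_combination E.t n * E.leadingSign_mul_self n

theorem leadingSign_mul_dplus_of_even {n : ℕ} (h : Even (E.a (n + 1))) :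
    E.leadingSign n * E.dplus n = E.t n * (E.leadingSign (n + 1) * E.dplus (n + 1)) := by
  have hodd : ¬Odd (E.a (n + 1)) := Int.not_odd_iff_even.mpr h
  have hlam : E.lam (n + 1) = 0 := if_neg hodd
  have hsign : E.leadingSign (n + 1) = E.leadingSign n := by
    rw [leadingSign, leadingSign, oddIdx_succ, if_neg hodd, add_zero]
  rw [dplus_eq, hlam, hsign]
  push_cast
  ring

theorem leadingSign_mul_dplus_mem_Icc (n : ℕ) : E.leadingSign n * E.dplus n ∈ Set.Icc 0 1 := by
  set s : ℕ → ℝ := fun k => E.leadingSign k * E.dplus k with hs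
  -- The distance from `s k` to `[0, 1]` when `s k` lies outside this interval.
  let f : ℕ → ℝ := fun k => max (-s k) (s k - 1)
  have hbdd : BddAbove (f '' Set.univ) := by
    refine ⟨3, ?_⟩
    rintro _ ⟨k, -, rfl⟩
    have hk : |s k| ≤ 3 := by
      rw [hs, abs_mul, abs_leadingSign, one_mul]
      exact E.abs_dplus_le_three k
    rw [abs_le] at hk
    exact max_le (by linarith) (by linarith)
  have hrec (k : ℕ) : f k ≤ E.t k * f (k + 1) := by
    have ht := E.htpos k
    have ht₁ := E.htlt1 k
    have hleft : E.t k * -s (k + 1) ≤ E.t k * f (k + 1) := by gcongr; exact le_max_left _ _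
    have hright : E.t k * (s (k + 1) - 1) ≤ E.t k * f (k + 1) := by gcongr; exact le_max_right _ _
    rcases Int.even_or_odd (E.a (k + 1)) with h | h
    · have hk : s k = E.t k * s (k + 1) := E.leadingSign_mul_dplus_of_even h
      exact max_le (by linarith) (by linarith)
    · have hk : s k = E.t k * (1 - s (k + 1)) := E.leadingSign_mul_dplus_of_odd h
      exact max_le (by linarith) (by linarith)
  have hf : f n ≤ 0 := by
    refine nonpos_of_le_mul_of_bddAbove (c := 2 / 3) (by norm_num) (by norm_num) hbdd
      (fun k _ hk => ⟨k + 1, Set.mem_univ _, ?_⟩) n (Set.mem_univ n)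
    have hpos : 0 < f (k + 1) := pos_of_mul_pos_right (hk.trans_le (hrec k)) (E.htpos k).le
    exact (hrec k).trans (by gcongr; exact (E.t_lt_two_thirds k).le)
  obtain ⟨hleft, hright⟩ := max_le_iff.mp hf
  exact ⟨by linarith, by linarith⟩

theorem abs_dplus_eq (n : ℕ) : |E.dplus n| = E.leadingSign n * E.dplus n := by
  rw [← abs_of_nonneg (E.leadingSign_mul_dplus_mem_Icc n).1, abs_mul, abs_leadingSign, one_mul]

theorem abs_dplus_le_one (n : ℕ) : |E.dplus n| ≤ 1 :=
  (E.abs_dplus_eq n).trans_le (E.leadingSign_mul_dplus_mem_Icc n).2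

theorem abs_dplus_of_odd {n : ℕ} (h : Odd (E.a (n + 1))) :
    |E.dplus n| = E.t n * (1 - |E.dplus (n + 1)|) := by
  rw [abs_dplus_eq, abs_dplus_eq, E.leadingSign_mul_dplus_of_odd h]

theorem abs_dplus_of_even {n : ℕ} (h : Even (E.a (n + 1))) :
    |E.dplus n| = E.t n * |E.dplus (n + 1)| := by
  rw [abs_dplus_eq, abs_dplus_eq, E.leadingSign_mul_dplus_of_even h]

theorem abs_dplus_le_t (n : ℕ) : |E.dplus n| ≤ E.t n := by
  have ht := (E.htpos n).le
  have hd := E.abs_dplus_le_one (n + 1)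
  rcases Int.even_or_odd (E.a (n + 1)) with h | h
  · rw [E.abs_dplus_of_even h]
    exact mul_le_of_le_one_right ht hd
  · rw [E.abs_dplus_of_odd h]
    exact mul_le_of_le_one_right ht (by linarith [abs_nonneg (E.dplus (n + 1))])

end DPlus

/-- The value `τ = (4 - √10) / 3` of the periodic continued fraction
`1/(4 - 1/(2 + 1/(2 + 1/(2 - τ))))`, which bounds
`α_i - |d_i⁺|` from above. -/
noncomputable def extremalTail : ℝ := (4 - √10) / 3

theorem extremalTail_quadratic : 3 * extremalTail ^ 2 - 8 * extremalTail + 2 = 0 := by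
  have hsq : √10 ^ 2 = (10 : ℝ) := Real.sq_sqrt (by norm_num)
  unfold extremalTail
  linear_combination hsq / 3

theorem sqrt_ten_add_four_mul_extremalTail : (√10 + 4) * extremalTail = 2 := by
  have hsq : √10 ^ 2 = (10 : ℝ) := Real.sq_sqrt (by norm_num)
  unfold extremalTail
  linear_combination -hsq / 3

theorem extremalTail_gt_d4 : 0.2792 < extremalTail := by
  have : √10 < 3.1624 := by
    rw [Real.sqrt_lt' (by norm_num)]
    norm_num
  unfold extremalTail
  linarith

theorem extremalTail_lt_d2 : extremalTail < 0.28 := by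
  have : 3.16 < √10 := by
    rw [Real.lt_sqrt (by norm_num)]
    norm_num
  unfold extremalTail
  linarith

/-- The signed partial quotients `4, -2, 2, 2` occur at `i + 1, …, i + 4` (with no condition on the
sign of the `4`) and are followed by a partial quotient `≥ 3` with sign `-1`. If `i`
satisfies the hypotheses of the theorem, this is the only way in which `α_i - |d_i⁺|` could exceed
`extremalTail`. -/
structure ExtremalBlock (i : ℕ) : Prop where
  a_one : E.a (i + 1) = 4
  e_two : E.e (i + 2) = -1
  a_two : E.a (i + 2) = 2
  e_three : E.e (i + 3) = 1
  a_three : E.a (i + 3) = 2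
  e_four : E.e (i + 4) = 1
  a_four : E.a (i + 4) = 2
  e_five : E.e (i + 5) = -1
  a_five : 3 ≤ E.a (i + 5)

variable {E} {i : ℕ}

theorem lt_t_of_extremalTail_lt (h : extremalTail < E.t i - |E.dplus i|) : 0.2792 < E.t i := by
  linarith [extremalTail_gt_d4, abs_nonneg (E.dplus i)]

theorem a_eq_four_of_extremalTail_lt (ha : 3 ≤ E.a (i + 1))
    (h : extremalTail < E.t i - |E.dplus i|) : E.a (i + 1) = 4 := by
  have ht := lt_t_of_extremalTail_lt h
  have hne_three : E.a (i + 1) ≠ 3 := fun ha₃ => by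
    have hlt := E.t_mul_lt_one_of_le_a ha
    have hd : |E.dplus i| = E.t i * (1 - |E.dplus (i + 1)|) :=
      E.abs_dplus_of_odd (by rw [ha₃]; decide)
    have hd' : |E.dplus (i + 1)| < 2 / 3 :=
      (E.abs_dplus_le_t (i + 1)).trans_lt (E.t_lt_two_thirds (i + 1))
    push_cast at hlt
    nlinarith [extremalTail_gt_d4]
  have hlt_five : E.a (i + 1) < 5 := by
    by_contra! ha₅
    have hlt := E.t_mul_lt_one_of_le_a ha₅
    push_cast at hlt
    linarith
  omega

theorem e_eq_neg_one_of_extremalTail_lt (ha : E.a (i + 1) = 4)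
    (h : extremalTail < E.t i - |E.dplus i|) : E.e (i + 2) = -1 := by
  refine (E.he (i + 2)).resolve_left fun he => ?_
  have hlt := (E.t_mul_a_lt_one_iff i).mpr he
  rw [ha] at hlt
  push_cast at hlt
  linarith [lt_t_of_extremalTail_lt h]

theorem one_third_le_t (he₁ : E.e (i + 1) = -1) (ha₁ : E.a (i + 1) = 4) (he₂ : E.e (i + 2) = -1)
    (ha₂ : E.a (i + 2) = 2) : 1 / 3 ≤ E.t (i + 2) := by
  have hcond : 1 / E.abar (i + 1) - 1 / E.t (i + 2) ≥ 1 := E.hcond2 (i + 2) (by omega) ha₂ he₂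
  rw [one_div_abar_succ, he₁, ha₁] at hcond
  push_cast at hcond
  have hle : 1 / E.t (i + 2) ≤ 3 := by linarith [E.abar_nonneg i]
  exact (one_div_le (E.htpos _) (by norm_num)).mp hle

theorem a_three_eq_two_of_extremalTail_lt (ha₁ : E.a (i + 1) = 4) (ha₂ : E.a (i + 2) = 2)
    (ht₀ : E.t i ≤ 0.28) (ht₁ : 0.418 < E.t (i + 1)) (ht₂ : 1 / 3 ≤ E.t (i + 2))
    (h : extremalTail < E.t i - |E.dplus i|) : E.a (i + 3) = 2 := by
  have h₂ := E.ha (i + 3) (by omega)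
  have hlt_four : E.a (i + 3) < 4 := by
    by_contra! ha₄
    have hlt := E.t_mul_lt_one_of_le_a ha₄
    push_cast at hlt
    linarith
  have hne_three : E.a (i + 3) ≠ 3 := fun ha₃ => by
    have hd₀ : |E.dplus i| = E.t i * |E.dplus (i + 1)| :=
      E.abs_dplus_of_even (by rw [ha₁]; decide)
    have hd₁ : |E.dplus (i + 1)| = E.t (i + 1) * |E.dplus (i + 2)| :=
      E.abs_dplus_of_even (by rw [ha₂]; decide)
    have hd₂ : |E.dplus (i + 2)| = E.t (i + 2) * (1 - |E.dplus (i + 3)|) :=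
      E.abs_dplus_of_odd (by rw [ha₃]; decide)
    have hd₃ : 1 / 3 ≤ 1 - |E.dplus (i + 3)| := by
      linarith [E.abs_dplus_le_t (i + 3), E.t_lt_two_thirds (i + 3)]
    have hlower : 0.2792 * (0.418 * (1 / 3 * (1 / 3))) ≤ |E.dplus i| := by
      rw [hd₀, hd₁, hd₂]
      have := lt_t_of_extremalTail_lt h
      gcongr
    norm_num at hlower
    linarith [extremalTail_gt_d4]
  omega

theorem extremalBlock_of_extremalTail_lt (he₁ : E.e (i + 1) = -1) (ha : 3 ≤ E.a (i + 1))
    (h : extremalTail < E.t i - |E.dplus i|) : E.ExtremalBlock i := by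
  have ht := lt_t_of_extremalTail_lt h
  have ha₁ := a_eq_four_of_extremalTail_lt ha h
  have he₂ := e_eq_neg_one_of_extremalTail_lt ha₁ h
  have hr₀ := E.t_mul_eq_one i
  rw [ha₁, he₂] at hr₀
  push_cast at hr₀
  have ht₁ : 0.418 < E.t (i + 1) := by nlinarith
  have ha₂ : E.a (i + 2) = 2 := E.a_eq_two_of_two_fifths_le (by linarith)
  have he₃ : E.e (i + 3) = 1 := E.e_succ_eq_one (by omega) ha₂ he₂
  have hr₁ : E.t (i + 1) * (E.a (i + 2) + E.e (i + 3) * E.t (i + 2)) = 1 := E.t_mul_eq_one (i + 1)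
  rw [ha₂, he₃] at hr₁
  push_cast at hr₁
  have ht₂ := one_third_le_t he₁ ha₁ he₂ ha₂
  have ht₂' : E.t (i + 2) < 2 / 5 := by nlinarith
  have ht₁' : E.t (i + 1) ≤ 3 / 7 := by nlinarith
  have ha₃ := a_three_eq_two_of_extremalTail_lt ha₁ ha₂ (by nlinarith) ht₁ ht₂ h
  have he₄ : E.e (i + 4) = 1 := by
    rw [← E.t_mul_a_lt_one_iff (i + 2), ha₃]
    push_cast
    linarith
  have hr₂ : E.t (i + 2) * (E.a (i + 3) + E.e (i + 4) * E.t (i + 3)) = 1 := E.t_mul_eq_one (i + 2)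
  rw [ha₃, he₄] at hr₂
  push_cast at hr₂
  have ht₃ : 1 / 2 < E.t (i + 3) := by nlinarith
  have ha₄ : E.a (i + 4) = 2 := E.a_eq_two_of_two_fifths_le (by linarith)
  have he₅ : E.e (i + 5) = -1 := by
    refine (E.he (i + 5)).resolve_left fun he => ?_
    rw [← E.t_mul_a_lt_one_iff (i + 3), ha₄] at he
    push_cast at he
    linarith
  exact ⟨ha₁, he₂, ha₂, he₃, ha₃, he₄, ha₄, he₅, E.three_le_a_succ (by omega) he₄ ha₄ he₅⟩

namespace ExtremalBlock

theorem abs_dplus_eq (hB : E.ExtremalBlock i) :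
    |E.dplus i| = E.t i * E.t (i + 1) * E.t (i + 2) * E.t (i + 3) * |E.dplus (i + 4)| := by
  rw [E.abs_dplus_of_even (n := i) (by rw [hB.a_one]; decide),
    E.abs_dplus_of_even (n := i + 1) (by rw [hB.a_two]; decide),
    E.abs_dplus_of_even (n := i + 2) (by rw [hB.a_three]; decide),
    E.abs_dplus_of_even (n := i + 3) (by rw [hB.a_four]; decide)]
  ring

theorem t_mul_eq_and_prod_mul_eq_one (hB : E.ExtremalBlock i) :
    E.t i * (43 - 18 * E.t (i + 4)) = 12 - 5 * E.t (i + 4) ∧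
      E.t i * E.t (i + 1) * E.t (i + 2) * E.t (i + 3) * (43 - 18 * E.t (i + 4)) = 1 := by
  have hr₀ := E.t_mul_eq_one i
  have hr₁ : E.t (i + 1) * (E.a (i + 2) + E.e (i + 3) * E.t (i + 2)) = 1 := E.t_mul_eq_one (i + 1)
  have hr₂ : E.t (i + 2) * (E.a (i + 3) + E.e (i + 4) * E.t (i + 3)) = 1 := E.t_mul_eq_one (i + 2)
  have hr₃ : E.t (i + 3) * (E.a (i + 4) + E.e (i + 5) * E.t (i + 4)) = 1 := E.t_mul_eq_one (i + 3)
  rw [hB.a_one, hB.e_two] at hr₀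
  rw [hB.a_two, hB.e_three] at hr₁
  rw [hB.a_three, hB.e_four] at hr₂
  rw [hB.a_four, hB.e_five] at hr₃
  push_cast at hr₀ hr₁ hr₂ hr₃
  generalize E.t (i + 4) = y at *
  -- The Möbius map of the block is `y ↦ (12 - 5 y) / (43 - 18 y)`.
  have h₂ : E.t (i + 2) * (5 - 2 * y) = 2 - y := by
    linear_combination (2 - y) * hr₂ - E.t (i + 2) * hr₃
  have h₁ : E.t (i + 1) * (12 - 5 * y) = 5 - 2 * y := by
    linear_combination (5 - 2 * y) * hr₁ - E.t (i + 1) * h₂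
  have h₀ : E.t i * (43 - 18 * y) = 12 - 5 * y := by
    linear_combination (12 - 5 * y) * hr₀ + E.t i * h₁
  refine ⟨h₀, ?_⟩
  linear_combination E.t (i + 1) * E.t (i + 2) * E.t (i + 3) * h₀ +
    E.t (i + 2) * E.t (i + 3) * h₁ + E.t (i + 3) * h₂ + hr₃

theorem excess_le (hB : E.ExtremalBlock i) (h : extremalTail < E.t i - |E.dplus i|) :
    E.t i - |E.dplus i| - extremalTail ≤
      1 / 25 * (E.t (i + 4) - |E.dplus (i + 4)| - extremalTail) := by
  obtain ⟨ht, hprod⟩ := hB.t_mul_eq_and_prod_mul_eq_one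
  have hexcess : (43 - 18 * E.t (i + 4)) * (E.t i - |E.dplus i| - extremalTail) =
      (18 * extremalTail - 5) * (E.t (i + 4) - extremalTail) - |E.dplus (i + 4)| := by
    rw [hB.abs_dplus_eq]
    linear_combination ht - |E.dplus (i + 4)| * hprod + 6 * extremalTail_quadratic
  have hden : 25 < 43 - 18 * E.t (i + 4) := by linarith [E.htlt1 (i + 4)]
  have hexcess_pos : 0 < E.t i - |E.dplus i| - extremalTail := sub_pos.mpr h
  have hnum : 0 < (18 * extremalTail - 5) * (E.t (i + 4) - extremalTail) := by
    have hlhs := mul_pos ((by norm_num : (0 : ℝ) < 25).trans hden) hexcess_pos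
    linarith [abs_nonneg (E.dplus (i + 4))]
  have hcontract : (18 * extremalTail - 5) * (E.t (i + 4) - extremalTail) ≤
      E.t (i + 4) - extremalTail := by
    have ht₄ := pos_of_mul_pos_right hnum (by linarith [extremalTail_gt_d4])
    exact mul_le_of_le_one_left ht₄.le (by linarith [extremalTail_lt_d2])
  have hden_mul := mul_le_mul_of_nonneg_right hden.le hexcess_pos.le
  linarith

end ExtremalBlock

theorem t_sub_abs_dplus_le_extremalTail (he : E.e (i + 1) = -1) (ha : 3 ≤ E.a (i + 1)) :
    E.t i - |E.dplus i| ≤ extremalTail := by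
  let s : Set ℕ := {k | E.e (k + 1) = -1 ∧ 3 ≤ E.a (k + 1)}
  let f : ℕ → ℝ := fun k => E.t k - |E.dplus k| - extremalTail
  have hbdd : BddAbove (f '' s) := by
    refine ⟨1, ?_⟩
    rintro _ ⟨k, -, rfl⟩
    linarith [E.htlt1 k, abs_nonneg (E.dplus k), extremalTail_gt_d4]
  have hstep : ∀ k ∈ s, 0 < f k → ∃ l ∈ s, f k ≤ 1 / 25 * f l := by
    intro k ⟨hek, hak⟩ hpos
    have hlt : extremalTail < E.t k - |E.dplus k| := sub_pos.mp hpos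
    have hB := extremalBlock_of_extremalTail_lt hek hak hlt
    exact ⟨k + 4, ⟨hB.e_five, hB.a_five⟩, hB.excess_le hlt⟩
  exact sub_nonpos.mp
    (nonpos_of_le_mul_of_bddAbove (by norm_num) (by norm_num) hbdd hstep i ⟨he, ha⟩)

end ANIE

theorem add_two_div_le_one_sub_add_div {s t d x : ℝ} (hs : 0 ≤ s) (hd : 0 ≤ d) (ht : t < 1)
    (hx₀ : 0 ≤ x) (hx₁ : x < 1) (h : (s + 4) * (t - d) ≤ 2) :
    (s + 2) / (s + 2 + 2 * (1 - x)) ≤ (1 - t + d) / (1 - x * t) := by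
  rw [div_le_div_iff₀ (by linarith) (by nlinarith)]
  have hmain : 0 ≤ (1 - x) * (2 - (s + 4) * (t - d)) := mul_nonneg (by linarith) (by linarith)
  have hrest : 0 ≤ d * x * (s + 2) := by positivity
  linarith

/-- Lemma 4: for an adjusted nearest integer expansion, if `ε_{i+1} = -1` and
`a_{i+1} ≥ 3` then `(1-α_i+|d_i^+|)/(1-ᾱ_iα_i) ≥ (√10+2)/(√10+2+2(1-ᾱ_i))`. -/
theorem stmt11 (α : ℝ) (hirr : Irrational α) (h0 : 0 < α) (h12 : α < 1 / 2)
    (E : ANIE α) (i : ℕ) (hi : 1 ≤ i)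
    (he : E.e (i + 1) = -1) (ha : 3 ≤ E.a (i + 1)) :
    (1 - E.t i + |E.dplus i|) / (1 - E.abar i * E.t i) ≥
      (Real.sqrt 10 + 2) / (Real.sqrt 10 + 2 + 2 * (1 - E.abar i)) := by
  have hle : (√10 + 4) * (E.t i - |E.dplus i|) ≤ 2 :=
    calc (√10 + 4) * (E.t i - |E.dplus i|) ≤ (√10 + 4) * ANIE.extremalTail := by
          gcongr
          exact ANIE.t_sub_abs_dplus_le_extremalTail he ha
      _ = 2 := ANIE.sqrt_ten_add_four_mul_extremalTail
  exact add_two_div_le_one_sub_add_div (Real.sqrt_nonneg 10) (abs_nonneg _) (E.htlt1 i)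
    (E.abar_nonneg i) (E.abar_lt_one i) hle
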